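/- arXiv:2603.26319 — 2 statements merged into one kernel-verified Lean document; each statement's English description precedes it below -/
import Mathlib

section
/- (Non-tightness for fast-growing non-negative boundary conditions.) Let n > 2, ã > 0, β > 0, let dρ(u) = e^{−ã|u|^n} du, and let G = (V,E) be an infinite connected graph of bounded degree with a fixed origin o ∈ V, equipped with the nearest-neighbour interactions J_G. Let ξ ∈ ℝ^V satisfy ξ_x ≥ 0 for all x ∈ V, and suppose that for every A ∈ (0,∞) there exists z ∈ V with ξ_z > A^{(n−1)^{d_G(o,z)}} (i.e. ξ ∉ Ξ). Then the family of measures (ν^ξ_{Λ,β,ρ,J_G})_{Λ finite ⊂ V} is not tight: there exists a finite Λ' ⊂ V such that the family of Λ'-marginals of ν^ξ_{Λ,β,ρ,J_G}, over finite Λ ⊇ Λ', is not uniformly tight. -/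
open MeasureTheory
open scoped ENNReal Classical

/-- The Hamiltonian `-H^ξ_{Λ,J}` (already multiplied by `β`). -/
noncomputable def hamil {V : Type*} (J : V → V → ℝ) (β : ℝ) (Λ : Finset V)
    (ξ : V → ℝ) (φ : ↥Λ → ℝ) : ℝ :=
  β * ((1 / 2) * ∑ x : ↥Λ, ∑ y : ↥Λ,
      (if x.1 ≠ y.1 then J x.1 y.1 * φ x * φ y else 0)
    + ∑ x : ↥Λ, φ x * ∑' y : {y : V // y ∉ Λ}, J x.1 y.1 * ξ y.1)

/-- The finite-volume Gibbs measure `ν^ξ_{Λ,β,ρ,J}` on `ℝ^Λ`. -/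
noncomputable def gibbs {V : Type*} (J : V → V → ℝ) (β : ℝ) (ρ : Measure ℝ)
    (Λ : Finset V) (ξ : V → ℝ) : Measure (↥Λ → ℝ) :=
  (((Measure.pi fun _ : ↥Λ => ρ).withDensity
      fun φ => ENNReal.ofReal (Real.exp (hamil J β Λ ξ φ))) Set.univ)⁻¹ •
    (Measure.pi fun _ : ↥Λ => ρ).withDensity
      fun φ => ENNReal.ofReal (Real.exp (hamil J β Λ ξ φ))

/-- The `Λ'`-marginal of a measure on `ℝ^Λ`, for `Λ' ⊆ Λ`. -/
noncomputable def marg {V : Type*} {Λ' Λ : Finset V} (h : Λ' ⊆ Λ)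
    (μ : Measure (↥Λ → ℝ)) : Measure (↥Λ' → ℝ) :=
  μ.map fun φ x => φ ⟨x.1, h x.2⟩


noncomputable def gIter (ρ : Measure ℝ) (β : ℝ) (h : ℕ → ℝ) (g : ℝ → ℝ≥0∞) : ℕ → ℝ → ℝ≥0∞
  | 0 => g
  | k + 1 => fun t => ∫⁻ u, ENNReal.ofReal (Real.exp (β * (h k + t) * u)) * gIter ρ β h g k u ∂ρ

lemma gIter_meas (ρ : Measure ℝ) [SigmaFinite ρ] (β : ℝ) (h : ℕ → ℝ) (g : ℝ → ℝ≥0∞)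
    (hg : Measurable g) (k : ℕ) : Measurable (gIter ρ β h g k) := by
  induction k with
  | zero => exact hg
  | succ k ih =>
    unfold gIter
    apply Measurable.lintegral_prod_right'
      (f := fun p : ℝ × ℝ => ENNReal.ofReal (Real.exp (β * (h k + p.1) * p.2)) * gIter ρ β h g k p.2)
    fun_prop

lemma gIter_mono (ρ : Measure ℝ) (β : ℝ) (h : ℕ → ℝ) (g g' : ℝ → ℝ≥0∞)
    (hg : ∀ u, g u ≤ g' u) (k : ℕ) (t : ℝ) : gIter ρ β h g k t ≤ gIter ρ β h g' k t := by
  induction k generalizing t with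
  | zero => exact hg t
  | succ k ih =>
    unfold gIter
    apply lintegral_mono
    intro u
    exact mul_le_mul_right (ih u) _

lemma lmarg_chain {V : Type*} (ρ : Measure ℝ) [SigmaFinite ρ] (β : ℝ) (h : ℕ → ℝ)
    (g : ℝ → ℝ≥0∞) (hg : Measurable g) (x : ℕ → V) (k : ℕ)
    (hx : ∀ i j, i ≤ k → j ≤ k → x i = x j → i = j) (ψ : V → ℝ) :
    lmarginal (fun _ : V => ρ) ((Finset.range k).image x)
      (fun ψ => g (ψ (x 0)) * ENNReal.ofReal (Real.exp
        (∑ i ∈ Finset.range k, β * (h i + ψ (x (i+1))) * ψ (x i)))) ψ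
    = gIter ρ β h g k (ψ (x k)) := by
  induction k generalizing ψ with
  | zero => simp [gIter]
  | succ k ih =>
    have hnot : ∀ j, k ≤ j → j ≤ k + 1 → x j ∉ (Finset.range k).image x := by
      intro j hj hj' hm
      obtain ⟨i, hi, hij⟩ := Finset.mem_image.1 hm
      have := Finset.mem_range.1 hi
      have := hx i j (by omega) (by omega) hij
      omega
    have hins : (Finset.range (k+1)).image x = insert (x k) ((Finset.range k).image x) := by
      rw [Finset.range_add_one, Finset.image_insert]
    rw [hins, lmarginal_insert _ (by fun_prop) (hnot k le_rfl (by omega))]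
    rw [gIter]
    apply lintegral_congr
    intro u
    have ih' := ih (fun i j hi hj => hx i j (by omega) (by omega)) (Function.update ψ (x k) u)
    rw [Function.update_self] at ih'
    rw [← ih', lmarginal, lmarginal, ← lintegral_const_mul]
    · apply lintegral_congr
      intro y
      rw [Finset.sum_range_succ, Real.exp_add, ENNReal.ofReal_mul (Real.exp_pos _).le]
      have e1 : ∀ j, k ≤ j → j ≤ k + 1 → Function.updateFinset (Function.update ψ (x k) u)
          ((Finset.range k).image x) y (x j) = Function.update ψ (x k) u (x j) := by
        intro j hj hj'
        simp only [Function.updateFinset]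
        rw [dif_neg (hnot j hj hj')]
      rw [e1 (k+1) (by omega) le_rfl, e1 k le_rfl (by omega), Function.update_self,
        Function.update_of_ne]
      · ring
      · intro hh
        have := hx _ _ le_rfl (by omega) hh
        omega
    · have : Measurable (fun y => Function.updateFinset (Function.update ψ (x k) u)
          ((Finset.range k).image x) y) := measurable_updateFinset
      fun_prop

lemma sym_pt (A B : ℝ≥0∞) (hAB : B ≤ A) (x w : ℝ) (hx : 0 < x) (hxw : x ≤ w) (h1 : 1 ≤ x * w) :
    ENNReal.ofReal x * A + ENNReal.ofReal x⁻¹ * B ≤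
    ENNReal.ofReal w * A + ENNReal.ofReal w⁻¹ * B := by
  have hw : 0 < w := hx.trans_le hxw
  obtain ⟨D, rfl⟩ := exists_add_of_le hAB
  have e : ∀ y : ℝ, 0 < y → ENNReal.ofReal y * (B + D) + ENNReal.ofReal y⁻¹ * B =
      ENNReal.ofReal (y + y⁻¹) * B + ENNReal.ofReal y * D := by
    intro y hy
    rw [ENNReal.ofReal_add hy.le (by positivity)]
    ring
  rw [e x hx, e w hw]
  have : x + x⁻¹ ≤ w + w⁻¹ := by
    have : w + w⁻¹ - (x + x⁻¹) = (w - x) * (x * w - 1) / (x * w) := by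
      field_simp
      ring
    have : 0 ≤ (w - x) * (x * w - 1) / (x * w) := by
      exact div_nonneg (mul_nonneg (by linarith) (by linarith)) (by positivity)
    linarith
  gcongr

noncomputable def rhoM (a n : ℝ) : Measure ℝ :=
  volume.withDensity fun u => ENNReal.ofReal (Real.exp (-(a * |u| ^ n)))

instance (a n : ℝ) : SigmaFinite (rhoM a n) := by
  unfold rhoM
  apply SigmaFinite.withDensity_ofReal

lemma lint_rho (a n : ℝ) (f : ℝ → ℝ≥0∞) (hf : Measurable f) :
    ∫⁻ u, f u ∂(rhoM a n) = ∫⁻ u, ENNReal.ofReal (Real.exp (-(a * |u| ^ n))) * f u := by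
  unfold rhoM
  rw [lintegral_withDensity_eq_lintegral_mul _ (by fun_prop) hf]
  rfl

def PProp (f : ℝ → ℝ≥0∞) : Prop := ∀ u w, |u| ≤ w → f u ≤ f w

lemma step_P (a n β h : ℝ) (hβ : 0 < β) (hh : 0 ≤ h) (f : ℝ → ℝ≥0∞) (hf : Measurable f)
    (hP : PProp f) :
    PProp (fun t => ∫⁻ u, ENNReal.ofReal (Real.exp (β * (h + t) * u)) * f u ∂(rhoM a n)) := by
  intro s t hst
  simp only
  rw [lint_rho _ _ _ (by fun_prop), lint_rho _ _ _ (by fun_prop)]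
  set Y : ℝ → ℝ → ℝ≥0∞ := fun s u => ENNReal.ofReal (Real.exp (-(a * |u| ^ n))) *
    (ENNReal.ofReal (Real.exp (β * (h + s) * u)) * f u) with hY
  have hYm : ∀ s, Measurable (Y s) := by intro s; fun_prop
  have key : ∀ s, (∫⁻ u, (Y s u + Y s (-u))) = 2 * ∫⁻ u, Y s u := by
    intro s
    rw [lintegral_add_left (hYm s), lintegral_neg_eq_self, two_mul]
  have hpt : ∀ u, 0 ≤ u → Y s u + Y s (-u) ≤ Y t u + Y t (-u) := by
    intro u hu
    set A : ℝ≥0∞ := ENNReal.ofReal (Real.exp (-(a * |u| ^ n))) *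
      (ENNReal.ofReal (Real.exp (β * h * u)) * f u) with hA
    set B : ℝ≥0∞ := ENNReal.ofReal (Real.exp (-(a * |u| ^ n))) *
      (ENNReal.ofReal (Real.exp (β * h * (-u))) * f (-u)) with hB
    have hBA : B ≤ A := by
      have h1 : f (-u) ≤ f u := hP _ _ (by rw [abs_neg, abs_of_nonneg hu])
      have h2 : Real.exp (β * h * (-u)) ≤ Real.exp (β * h * u) := by
        apply Real.exp_le_exp.2
        have : 0 ≤ β * h * u := by positivity
        linarith
      rw [hA, hB]
      gcongr
    have e1 : ∀ s, Y s u = ENNReal.ofReal (Real.exp (β * s * u)) * A := by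
      intro s
      rw [hY, hA]
      simp only
      rw [show β * (h + s) * u = β * s * u + β * h * u by ring, Real.exp_add,
        ENNReal.ofReal_mul (Real.exp_pos _).le]
      ring
    have e2 : ∀ s, Y s (-u) = ENNReal.ofReal (Real.exp (β * s * u))⁻¹ * B := by
      intro s
      rw [hY, hB]
      simp only
      rw [show β * (h + s) * -u = -(β * s * u) + β * h * -u by ring, Real.exp_add,
        ENNReal.ofReal_mul (Real.exp_pos _).le, Real.exp_neg (β * s * u), abs_neg]
      ring
    rw [e1, e1, e2, e2]
    obtain ⟨h1, h2⟩ := abs_le.1 hst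
    apply sym_pt _ _ hBA _ _ (Real.exp_pos _)
    · apply Real.exp_le_exp.2
      gcongr
    · rw [← Real.exp_add]
      apply Real.one_le_exp
      have : 0 ≤ β * (s + t) * u := mul_nonneg (mul_nonneg hβ.le (by linarith)) hu
      linarith
  have hle : (2:ℝ≥0∞) * ∫⁻ u, Y s u ≤ 2 * ∫⁻ u, Y t u := by
    rw [← key, ← key]
    apply lintegral_mono
    intro u
    rcases le_total 0 u with hu | hu
    · exact hpt u hu
    · have := hpt (-u) (by linarith)
      rw [neg_neg] at this
      simp only
      rw [add_comm (Y s u), add_comm (Y t u)]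
      exact this
  exact (ENNReal.mul_le_mul_iff_right (by norm_num) (by norm_num)).1 hle

lemma step_B (a n β h C m s : ℝ) (ha : 0 < a) (hn : 2 < n) (hβ : 0 < β) (hh : 0 ≤ h)
    (f : ℝ → ℝ≥0∞) (hf : Measurable f) (hP : PProp f) (hC1 : 1 ≤ β * C)
    (hC2 : a * 4 ^ n ≤ β * C) (hm : 1 ≤ m) (hs : C * m ^ (n - 1) ≤ s) :
    ∫⁻ u, ENNReal.ofReal (Real.exp (β * (h + s) * u)) * (if u < m then f u else 0) ∂(rhoM a n)
    ≤ ENNReal.ofReal (2 * Real.exp (-(2 * m))) *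
      ∫⁻ u, ENNReal.ofReal (Real.exp (β * (h + s) * u)) * f u ∂(rhoM a n) := by
  have hif : Measurable (fun u => if u < m then f u else 0) :=
    Measurable.ite measurableSet_Iio hf measurable_const
  rw [lint_rho _ _ _ (by fun_prop), lint_rho _ _ _ (by fun_prop)]
  set Y : ℝ → ℝ≥0∞ := fun u => ENNReal.ofReal (Real.exp (-(a * |u| ^ n))) *
    (ENNReal.ofReal (Real.exp (β * (h + s) * u)) * f u) with hY
  have hYm : Measurable Y := by fun_prop
  set τ := h + s with hτ
  have hpow : m ^ n = m ^ (n-1) * m := by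
    rw [← Real.rpow_add_one (by positivity)]; ring_nf
  have hpow1 : 1 ≤ m ^ (n-1) := Real.one_le_rpow hm (by linarith)
  have hC : 0 < C := by
    by_contra hc
    have : β * C ≤ 0 := mul_nonpos_of_nonneg_of_nonpos hβ.le (by linarith)
    linarith
  have hτ1 : β * C * m ^ (n-1) ≤ β * τ := by
    rw [mul_assoc]; apply mul_le_mul_of_nonneg_left _ hβ.le; linarith
  have hτ2 : 1 ≤ β * τ := by nlinarith
  have hτ3 : a * (4 * m) ^ n ≤ β * τ * m := by
    rw [Real.mul_rpow (by norm_num) (by positivity), hpow]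
    calc a * (4 ^ n * (m ^ (n-1) * m)) = (a * 4 ^ n) * m ^ (n-1) * m := by ring
      _ ≤ (β * C) * m ^ (n-1) * m := by gcongr
      _ ≤ _ := by gcongr
  set D := ENNReal.ofReal (Real.exp (-(2 * m))) with hD
  have hpt : ∀ u, ENNReal.ofReal (Real.exp (-(a * |u| ^ n))) *
      (ENNReal.ofReal (Real.exp (β * τ * u)) * (if u < m then f u else 0))
      ≤ D * (Y (-u) + Y (u + 3 * m)) := by
    intro u
    split_ifs with hu
    swap
    · simp
    rcases le_total (-m) u with hu2 | hu2
    · refine le_trans ?_ (mul_le_mul_right le_add_self D)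
      rw [hY]
      simp only
      have hfu : f u ≤ f (u + 3 * m) := hP _ _ (by rw [abs_le]; constructor <;> linarith)
      rw [← mul_assoc, ← mul_assoc, ← mul_assoc, hD, ← ENNReal.ofReal_mul (Real.exp_pos _).le,
        ← ENNReal.ofReal_mul (Real.exp_pos _).le, ← Real.exp_add,
        ← ENNReal.ofReal_mul (by positivity), ← Real.exp_add, ← Real.exp_add]
      apply mul_le_mul' _ hfu
      apply ENNReal.ofReal_le_ofReal
      apply Real.exp_le_exp.2
      have h1 : 0 ≤ a * |u| ^ n := by positivity
      have h2 : a * |u + 3 * m| ^ n ≤ a * (4 * m) ^ n := by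
        have : |u + 3 * m| ≤ 4 * m := by rw [abs_le]; constructor <;> linarith
        gcongr
      nlinarith
    · refine le_trans ?_ (mul_le_mul_right le_self_add D)
      rw [hY]
      simp only
      have hfu : f u ≤ f (-u) := hP _ _ (by rw [abs_of_nonpos (by linarith)])
      rw [← mul_assoc, ← mul_assoc, ← mul_assoc, hD, ← ENNReal.ofReal_mul (Real.exp_pos _).le,
        ← ENNReal.ofReal_mul (Real.exp_pos _).le, ← Real.exp_add,
        ← ENNReal.ofReal_mul (by positivity), ← Real.exp_add, ← Real.exp_add]
      apply mul_le_mul' _ hfu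
      apply ENNReal.ofReal_le_ofReal
      apply Real.exp_le_exp.2
      rw [abs_neg]
      nlinarith
  calc _ ≤ ∫⁻ u, D * (Y (-u) + Y (u + 3 * m)) := lintegral_mono hpt
    _ = D * (2 * ∫⁻ u, Y u) := by
      rw [lintegral_const_mul _ (by fun_prop), lintegral_add_left (by fun_prop),
        lintegral_neg_eq_self, lintegral_add_right_eq_self, two_mul]
    _ = _ := by
      rw [ENNReal.ofReal_mul (by norm_num), ENNReal.ofReal_ofNat]
      ring

lemma iter_P (a n β : ℝ) (h : ℕ → ℝ) (hβ : 0 < β) (hh : ∀ i, 0 ≤ h i) (k : ℕ) :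
    PProp (gIter (rhoM a n) β h (fun _ => 1) k) := by
  induction k with
  | zero => intro u w _; exact le_rfl
  | succ k ih => exact step_P a n β (h k) hβ (hh k) _ (gIter_meas _ _ _ _ measurable_const _) ih

lemma chain_bound (a n β C : ℝ) (h : ℕ → ℝ) (m : ℕ → ℝ) (ha : 0 < a) (hn : 2 < n) (hβ : 0 < β)
    (hh : ∀ i, 0 ≤ h i) (hC1 : 1 ≤ β * C)
    (hC2 : a * 4 ^ n ≤ β * C) (hm : ∀ i, 1 ≤ m i) (hmm : ∀ i, C * m i ^ (n - 1) ≤ m (i+1))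
    (k : ℕ) (t : ℝ) (ht : m k ≤ t) :
    gIter (rhoM a n) β h (fun u => if u < m 0 then 1 else 0) k t ≤
     (∑ j ∈ Finset.range k, ENNReal.ofReal (2 * Real.exp (-(2 * m j)))) *
      gIter (rhoM a n) β h (fun _ => 1) k t := by
  induction k generalizing t with
  | zero => simp [gIter, not_lt.2 ht]
  | succ k ih =>
    set F := gIter (rhoM a n) β h (fun _ => 1) k with hF
    set N := gIter (rhoM a n) β h (fun u => if u < m 0 then 1 else 0) k with hN
    set e := (∑ j ∈ Finset.range k, ENNReal.ofReal (2 * Real.exp (-(2 * m j)))) with he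
    have hFm : Measurable F := gIter_meas _ _ _ _ measurable_const _
    have hNF : ∀ u, N u ≤ F u := fun u => gIter_mono _ _ _ _ _ (by intro u; split_ifs <;> simp) _ _
    have hif : Measurable (fun u => if u < m k then F u else 0) :=
      Measurable.ite measurableSet_Iio hFm measurable_const
    have hpt : ∀ u, N u ≤ (if u < m k then F u else 0) + e * F u := by
      intro u
      split_ifs with hu
      · exact (hNF u).trans le_self_add
      · rw [zero_add]; exact ih u (not_lt.1 hu)
    rw [Finset.sum_range_succ, gIter, gIter, ← hF, ← hN, ← he]
    calc _ ≤ ∫⁻ u, (ENNReal.ofReal (Real.exp (β * (h k + t) * u)) * (if u < m k then F u else 0)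
          + e * (ENNReal.ofReal (Real.exp (β * (h k + t) * u)) * F u)) ∂(rhoM a n) := by
          apply lintegral_mono
          intro u
          refine (mul_le_mul_right (hpt u) _).trans (le_of_eq ?_)
          ring
      _ = (∫⁻ u, (ENNReal.ofReal (Real.exp (β * (h k + t) * u)) * (if u < m k then F u else 0)) ∂(rhoM a n))
          + e * ∫⁻ u, (ENNReal.ofReal (Real.exp (β * (h k + t) * u)) * F u) ∂(rhoM a n) := by
          rw [lintegral_add_left (by fun_prop), lintegral_const_mul _ (by fun_prop)]
      _ ≤ _ := by
          rw [add_mul, add_comm]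
          gcongr
          exact step_B a n β (h k) C (m k) t ha hn hβ (hh k) F hFm (iter_P a n β h hβ hh k) hC1 hC2
            (hm k) ((hmm k).trans ht)

lemma sum_small (m : ℕ → ℝ) (hm : ∀ j : ℕ, 2 * ((j:ℝ) + 1) ≤ m j) (k : ℕ) :
    ∑ j ∈ Finset.range k, ENNReal.ofReal (2 * Real.exp (-(2 * m j))) ≤ ENNReal.ofReal (1/2) := by
  rw [← ENNReal.ofReal_sum_of_nonneg (fun _ _ => by positivity)]
  apply ENNReal.ofReal_le_ofReal
  have h1 : ∀ j : ℕ, 2 * Real.exp (-(2 * m j)) ≤ (1/2) ^ (j+2) := by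
    intro j
    have e1 : Real.exp (-1) ≤ 1/2 := by
      have := Real.add_one_le_exp (1:ℝ)
      rw [Real.exp_neg, inv_le_comm₀ (Real.exp_pos _) (by norm_num)]
      norm_num at *
      linarith
    have e2 : Real.exp (-(2 * m j)) ≤ (1/2) ^ (j + 3) := by
      calc Real.exp (-(2 * m j)) ≤ Real.exp (((j+3 : ℕ):ℝ) * (-1)) := by
            apply Real.exp_le_exp.2
            have := hm j
            have : (0:ℝ) ≤ j := by positivity
            push_cast
            nlinarith
        _ = Real.exp (-1) ^ (j+3) := by rw [Real.exp_nat_mul]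
        _ ≤ _ := by gcongr
    rw [pow_succ] at e2
    linarith
  have h2 : ∀ k : ℕ, ∑ j ∈ Finset.range k, ((1:ℝ)/2) ^ (j+2) = 1/2 - (1/2)^(k+1) := by
    intro k
    induction k with
    | zero => norm_num
    | succ k ih => rw [Finset.sum_range_succ, ih]; ring
  calc _ ≤ ∑ j ∈ Finset.range k, ((1:ℝ)/2) ^ (j+2) := Finset.sum_le_sum fun j _ => h1 j
    _ ≤ 1/2 := by rw [h2]; have : (0:ℝ) ≤ (1/2)^(k+1) := by positivity
                  linarith

lemma dbl_sum (b : ℕ → ℝ) (k : ℕ) :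
    (1/2 : ℝ) * ∑ i ∈ Finset.range (k+1), ∑ j ∈ Finset.range (k+1),
      (if i + 1 = j ∨ j + 1 = i then (1:ℝ) else 0) * b i * b j
    = ∑ i ∈ Finset.range k, b (i+1) * b i := by
  induction k with
  | zero => simp
  | succ k ih =>
    have e1 : ∑ i ∈ Finset.range (k+1),
        (if i + 1 = k + 1 ∨ k + 1 + 1 = i then (1:ℝ) else 0) * b i * b (k+1) = b k * b (k+1) := by
      rw [Finset.sum_range_succ, Finset.sum_eq_zero]
      · simp
      · intro i hi
        have := Finset.mem_range.1 hi
        rw [if_neg (by omega)]; ring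
    have e2 : ∑ j ∈ Finset.range (k+1),
        (if k + 1 + 1 = j ∨ j + 1 = k + 1 then (1:ℝ) else 0) * b (k+1) * b j = b k * b (k+1) := by
      rw [← e1]
      apply Finset.sum_congr rfl
      intro j _
      simp only [or_comm]; ring
    rw [Finset.sum_range_succ _ k, ← ih, Finset.sum_range_succ _ (k+1)]
    simp_rw [Finset.sum_range_succ _ (k+1)]
    rw [Finset.sum_add_distrib, e1, e2]
    rw [if_neg (by omega)]
    ring

lemma hamil_chain {V : Type*} (J : V → V → ℝ) (β : ℝ) (ξ : V → ℝ) (x : ℕ → V) (k : ℕ)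
    (hx : ∀ i j, i ≤ k + 1 → j ≤ k + 1 → x i = x j → i = j)
    (hJ : ∀ i j, i ≤ k + 1 → j ≤ k + 1 →
      J (x i) (x j) = if i + 1 = j ∨ j + 1 = i then (1:ℝ) else 0)
    (ψ : V → ℝ) (hψ : ψ (x (k+1)) = ξ (x (k+1))) :
    hamil J β ((Finset.range (k+1)).image x) ξ (fun y => ψ y.1) =
      ∑ i ∈ Finset.range (k+1), β * (((∑' y : {y : V // y ∉ (Finset.range (k+1)).image x},
        J (x i) y.1 * ξ y.1) - (if i = k then ξ (x (k+1)) else 0)) + ψ (x (i+1))) * ψ (x i) := by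
  set Λ := (Finset.range (k+1)).image x with hΛ
  have hsum : ∀ f : V → ℝ, ∑ y : ↥Λ, f y.1 = ∑ i ∈ Finset.range (k+1), f (x i) := by
    intro f
    rw [Finset.sum_coe_sort Λ f, hΛ, Finset.sum_image]
    intro i hi j hj hij
    have := Finset.mem_range.1 hi
    have := Finset.mem_range.1 hj
    exact hx i j (by omega) (by omega) hij
  unfold hamil
  have h1 : ∑ v : ↥Λ, ∑ y : ↥Λ, (if v.1 ≠ y.1 then J v.1 y.1 * ψ v.1 * ψ y.1 else 0) =
      ∑ i ∈ Finset.range (k+1), ∑ j ∈ Finset.range (k+1),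
      (if i + 1 = j ∨ j + 1 = i then (1:ℝ) else 0) * ψ (x i) * ψ (x j) := by
    have := hsum (fun v => ∑ y : ↥Λ, (if v ≠ y.1 then J v y.1 * ψ v * ψ y.1 else 0))
    rw [this]
    apply Finset.sum_congr rfl
    intro i hi
    have := hsum (fun y => (if x i ≠ y then J (x i) y * ψ (x i) * ψ y else 0))
    rw [this]
    apply Finset.sum_congr rfl
    intro j hj
    have := Finset.mem_range.1 hi
    have := Finset.mem_range.1 hj
    split_ifs with h1 h2 h2
    · rw [hJ i j (by omega) (by omega), if_pos h2]
    · rw [hJ i j (by omega) (by omega), if_neg h2]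
    · have := hx i j (by omega) (by omega) (not_not.1 h1)
      omega
    · ring
  have h2 := hsum (fun v => ψ v * ∑' y : {y : V // y ∉ Λ}, J v y.1 * ξ y.1)
  rw [h1, h2, dbl_sum (fun i => ψ (x i)) k]
  rw [Finset.sum_range_succ, Finset.sum_range_succ]
  have h3 : ∀ i ∈ Finset.range k, β * (((∑' y : {y : V // y ∉ Λ},
        J (x i) y.1 * ξ y.1) - (if i = k then ξ (x (k+1)) else 0)) + ψ (x (i+1))) * ψ (x i) =
      β * (ψ (x (i+1)) * ψ (x i)) + β * (ψ (x i) * (∑' y : {y : V // y ∉ Λ},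
        J (x i) y.1 * ξ y.1)) := by
    intro i hi
    have := Finset.mem_range.1 hi
    rw [if_neg (by omega)]
    ring
  rw [Finset.sum_congr rfl h3, Finset.sum_add_distrib, ← Finset.mul_sum, ← Finset.mul_sum,
    if_pos rfl, hψ]
  ring

lemma gibbs_int {V : Type*} (J : V → V → ℝ) (β : ℝ) (ρ : Measure ℝ) [SigmaFinite ρ]
    (ξ : V → ℝ) (x : ℕ → V) (k : ℕ)
    (hx : ∀ i j, i ≤ k + 1 → j ≤ k + 1 → x i = x j → i = j)
    (hJ : ∀ i j, i ≤ k + 1 → j ≤ k + 1 →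
      J (x i) (x j) = if i + 1 = j ∨ j + 1 = i then (1:ℝ) else 0)
    (g : ℝ → ℝ≥0∞) (hg : Measurable g) (Λ : Finset V) (hΛ : Λ = (Finset.range (k+1)).image x)
    (h0 : x 0 ∈ Λ) :
    ∫⁻ φ, g (φ ⟨x 0, h0⟩) * ENNReal.ofReal (Real.exp (hamil J β Λ ξ φ))
      ∂(Measure.pi fun _ : ↥Λ => ρ) =
    gIter ρ β (fun i => (∑' y : {y : V // y ∉ Λ},
        J (x i) y.1 * ξ y.1) - (if i = k then ξ (x (k+1)) else 0)) g (k+1) (ξ (x (k+1))) := by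
  subst hΛ
  rw [← lmarg_chain ρ β _ g hg x (k+1) hx ξ, lmarginal]
  apply lintegral_congr
  intro φ
  set ψ := Function.updateFinset ξ ((Finset.range (k+1)).image x) φ with hψ
  have e : φ = fun y => ψ y.1 := by
    ext y
    rw [hψ, Function.updateFinset, dif_pos y.2]
  have hk : ψ (x (k+1)) = ξ (x (k+1)) := by
    rw [hψ, Function.updateFinset, dif_neg]
    intro hm
    obtain ⟨i, hi, hij⟩ := Finset.mem_image.1 hm
    have := Finset.mem_range.1 hi
    have := hx i (k+1) (by omega) (by omega) hij
    omega
  have := hamil_chain J β ξ x k hx hJ ψ hk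
  rw [← this, ← e]
  congr 2
  rw [e]

lemma geodesic {V : Type*} (G : SimpleGraph V) (hconn : G.Connected) (o z : V) :
    ∃ x : ℕ → V, x 0 = o ∧ x (G.dist o z) = z ∧ (∀ i, i ≤ G.dist o z → G.dist o (x i) = i) ∧
      ∀ i, i < G.dist o z → G.Adj (x i) (x (i+1)) := by
  obtain ⟨p, hp⟩ := hconn.exists_walk_length_eq_dist o z
  refine ⟨p.getVert, p.getVert_zero, ?_, ?_, ?_⟩
  · rw [← hp]; exact p.getVert_length
  · intro i hi
    have h1 := SimpleGraph.dist_le (p.take i)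
    have h2 := SimpleGraph.dist_le (p.drop i)
    have h3 := hconn.dist_triangle (u := o) (v := p.getVert i) (w := z)
    rw [SimpleGraph.Walk.take_length] at h1
    rw [SimpleGraph.Walk.drop_length] at h2
    omega
  · intro i hi
    exact p.adj_getVert_succ (by omega)

lemma mseq (n C M : ℝ) (hn : 2 < n) (hC : 2 ≤ C) (hM : 2 ≤ M) :
    ∃ m : ℕ → ℝ, m 0 = M ∧ (∀ i, C * m i ^ (n-1) = m (i+1)) ∧
      (∀ j : ℕ, 2 * ((j:ℝ) + 1) ≤ m j) ∧
      ∃ A : ℝ, M ≤ A ∧ ∀ j, m j ≤ A ^ ((n-1)^j) := by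
  let m : ℕ → ℝ := fun j => Nat.rec M (fun _ y => C * y ^ (n-1)) j
  have hms : ∀ i, C * m i ^ (n-1) = m (i+1) := fun i => rfl
  have hgrow : ∀ j : ℕ, 2 * ((j:ℝ) + 1) ≤ m j := by
    intro j
    induction j with
    | zero => simpa [m] using hM
    | succ j ih =>
      have hj : (0:ℝ) ≤ j := by positivity
      have h1 : 1 ≤ m j := by linarith
      have h2 : m j ≤ m j ^ (n-1) := Real.self_le_rpow_of_one_le h1 (by linarith)
      rw [← hms]
      push_cast
      nlinarith
  refine ⟨m, rfl, hms, hgrow, ?_⟩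
  set b := C ^ (1 / (n-2)) with hb
  have hb1 : 1 ≤ b := Real.one_le_rpow (by linarith) (by apply div_nonneg <;> linarith)
  have hbC : b ^ (n-2) = C := by
    rw [hb, ← Real.rpow_mul (by linarith), one_div, inv_mul_cancel₀ (by linarith), Real.rpow_one]
  have hbC2 : b ^ (n-1) = b * C := by
    rw [← hbC, ← Real.rpow_one_add' (by linarith) (by linarith)]; ring_nf
  have hpos : ∀ j, 0 ≤ m j := fun j => by
    have := hgrow j
    have : (0:ℝ) ≤ j := by positivity
    linarith
  have key : ∀ j, b * m j = (b * M) ^ ((n-1)^j) := by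
    intro j
    induction j with
    | zero => simp [m]
    | succ j ih =>
      rw [pow_succ, Real.rpow_mul (by nlinarith), ← ih, Real.mul_rpow (by linarith) (hpos j), hbC2,
        ← hms]
      ring
  refine ⟨b * M, by nlinarith, fun j => ?_⟩
  rw [← key]
  nlinarith [hpos j]

/-- Proposition `Anti-tightness prop`: non-tightness for fast-growing
non-negative boundary conditions. Let `n > 2`, `aT > 0`, `β > 0`,
`dρ(u) = e^(-aT|u|^n) du`, and let `G` be an infinite connected bounded-degree graph with
origin `o`, equipped with nearest-neighbour interactions. If `ξ ≥ 0` and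
`ξ ∉ Ξ` (i.e. for every `A > 0` there is `z` with `ξ_z > A^((n-1)^{d_G(o,z)})`), then the
family `(ν^ξ_{Λ,β,ρ,J_G})_Λ` is not tight: there is a finite `Λ'` such that the family
of `Λ'`-marginals over finite `Λ ⊇ Λ'` is not uniformly tight. -/
theorem stmt9 {V : Type*} (G : SimpleGraph V) [DecidableRel G.Adj] [Infinite V]
    (hconn : G.Connected) [∀ x : V, Fintype (G.neighborSet x)]
    (hbdd : ∃ D : ℕ, ∀ x : V, G.degree x ≤ D)
    (o : V) (n aT β : ℝ) (hn : 2 < n) (haT : 0 < aT) (hβ : 0 < β)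
    (ξ : V → ℝ) (hξpos : ∀ x, 0 ≤ ξ x)
    (hξ : ∀ A : ℝ, 0 < A → ∃ z : V, A ^ ((n - 1) ^ G.dist o z) < ξ z) :
    ∃ Λ' : Finset V, ¬ (∀ ε : ℝ, 0 < ε → ∃ K : Set (↥Λ' → ℝ), IsCompact K ∧
      ∀ (Λ : Finset V) (h : Λ' ⊆ Λ),
        ENNReal.ofReal (1 - ε) ≤
          marg h (gibbs (fun x y => if G.Adj x y then 1 else 0) β
            (volume.withDensity fun u => ENNReal.ofReal (Real.exp (-(aT * |u| ^ n))))
            Λ ξ) K) := by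
  refine ⟨{o}, fun H => ?_⟩
  obtain ⟨K, hK, H⟩ := H (1/4) (by norm_num)
  set J : V → V → ℝ := fun x y => if G.Adj x y then 1 else 0 with hJdef
  have hJ0 : ∀ x y, 0 ≤ J x y := by intro x y; rw [hJdef]; simp only; split_ifs <;> norm_num
  obtain ⟨R, hR⟩ := hK.isBounded.exists_norm_le
  -- constants
  obtain ⟨C, hC2, hC1, hC3⟩ : ∃ C : ℝ, 2 ≤ C ∧ 1 ≤ β * C ∧ aT * 4 ^ n ≤ β * C := by
    refine ⟨2 + 1 / β + aT * 4 ^ n / β, ?_, ?_, ?_⟩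
    · have : 0 ≤ 1 / β + aT * 4 ^ n / β := by positivity
      linarith
    · have : β * (2 + 1 / β + aT * 4 ^ n / β) = 2 * β + 1 + aT * 4 ^ n := by field_simp
      rw [this]
      have : 0 ≤ aT * 4 ^ n := by positivity
      linarith
    · have : β * (2 + 1 / β + aT * 4 ^ n / β) = 2 * β + 1 + aT * 4 ^ n := by field_simp
      rw [this]
      linarith
  obtain ⟨M, hM2, hMR, hMξ⟩ : ∃ M : ℝ, 2 ≤ M ∧ R < M ∧ ξ o ≤ M :=
    ⟨2 + |R| + |ξ o|, by linarith [abs_nonneg R, abs_nonneg (ξ o)],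
      by linarith [le_abs_self R, abs_nonneg (ξ o)],
      by linarith [le_abs_self (ξ o), abs_nonneg R]⟩
  obtain ⟨m, hm0, hms, hmg, A, hMA, hmA⟩ := mseq n C M hn hC2 hM2
  obtain ⟨z, hz⟩ := hξ A (by linarith)
  obtain ⟨x, hx0, hxz, hxd, hxa⟩ := geodesic G hconn o z
  obtain ⟨k, hk⟩ : ∃ k, G.dist o z = k + 1 := by
    rcases Nat.eq_zero_or_pos (G.dist o z) with h | h
    · exfalso
      have hzo : o = z := hconn.dist_eq_zero_iff.1 h
      rw [h, pow_zero, Real.rpow_one, ← hzo] at hz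
      linarith
    · exact ⟨G.dist o z - 1, by omega⟩
  rw [hk] at hz hxz hxd hxa
  have hinj : ∀ i j, i ≤ k + 1 → j ≤ k + 1 → x i = x j → i = j := by
    intro i j hi hj hij
    rw [← hxd i hi, ← hxd j hj, hij]
  have hJ : ∀ i j, i ≤ k + 1 → j ≤ k + 1 →
      J (x i) (x j) = if i + 1 = j ∨ j + 1 = i then (1:ℝ) else 0 := by
    intro i j hi hj
    rw [hJdef]
    simp only
    congr 1
    apply propext
    constructor
    · intro hadj
      have h1 : G.dist (x i) (x j) = 1 := SimpleGraph.dist_eq_one_iff_adj.2 hadj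
      have h2 := hconn.dist_triangle (u := o) (v := x i) (w := x j)
      have h3 := hconn.dist_triangle (u := o) (v := x j) (w := x i)
      rw [SimpleGraph.dist_comm (u := x j)] at h3
      rw [hxd i hi, hxd j hj] at h2 h3
      have : i ≠ j := by rintro rfl; exact G.loopless.irrefl _ hadj
      omega
    · rintro (h | h)
      · rw [← h]; exact hxa i (by omega)
      · rw [← h]; exact (hxa j (by omega)).symm
  set Λ := (Finset.range (k+1)).image x with hΛ
  have h0 : x 0 ∈ Λ := Finset.mem_image.2 ⟨0, by simp, rfl⟩
  have hsub : ({o} : Finset V) ⊆ Λ := by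
    rw [Finset.singleton_subset_iff, ← hx0]; exact h0
  have hzΛ : z ∉ Λ := by
    intro hm
    obtain ⟨i, hi, hij⟩ := Finset.mem_image.1 hm
    have := Finset.mem_range.1 hi
    have := hinj i (k+1) (by omega) (by omega) (hij.trans hxz.symm)
    omega
  set h : ℕ → ℝ := fun i => (∑' y : {y : V // y ∉ Λ},
        J (x i) y.1 * ξ y.1) - (if i = k then ξ (x (k+1)) else 0) with hh
  have hhpos : ∀ i, 0 ≤ h i := by
    intro i
    rw [hh]
    simp only
    split_ifs with hik
    · subst hik
      have hsumm : Summable (fun y : {y : V // y ∉ Λ} => J (x i) y.1 * ξ y.1) := by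
        apply summable_of_finite_support
        have hfin : (G.neighborSet (x i)).Finite := Set.toFinite _
        apply (hfin.preimage (f := fun y : {y : V // y ∉ Λ} => y.1)
          (Subtype.val_injective.injOn)).subset
        intro y hy
        rw [Function.mem_support] at hy
        by_contra hc
        apply hy
        have : ¬ G.Adj (x i) y.1 := hc
        rw [hJdef]; simp [this]
      have := hsumm.le_tsum (⟨z, hzΛ⟩ : {y : V // y ∉ Λ})
        (fun y _ => mul_nonneg (hJ0 _ _) (hξpos _))
      simp only at this
      rw [← hxz, hJ i (i+1) (by omega) (by omega), if_pos (Or.inl rfl), one_mul] at this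
      linarith
    · have : 0 ≤ ∑' y : {y : V // y ∉ Λ}, J (x i) y.1 * ξ y.1 :=
        tsum_nonneg (fun y => mul_nonneg (hJ0 _ _) (hξpos _))
      linarith
  have hbound := chain_bound aT n β C h m haT hn hβ hhpos hC1 hC3
    (fun i => by have := hmg i; have : (0:ℝ) ≤ i := by positivity
                 linarith) (fun i => (hms i).le) (k+1) (ξ (x (k+1)))
    (by rw [hxz]; exact (hmA (k+1)).trans hz.le)
  have hbound2 := hbound.trans (mul_le_mul_left (sum_small m hmg (k+1)) _)
  have hgm : Measurable (fun u : ℝ => if u < m 0 then (1:ℝ≥0∞) else 0) :=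
    Measurable.ite measurableSet_Iio measurable_const measurable_const
  rw [← gibbs_int J β (rhoM aT n) ξ x k hinj hJ _ hgm Λ hΛ h0,
    ← gibbs_int J β (rhoM aT n) ξ x k hinj hJ _ measurable_const Λ hΛ h0] at hbound2
  have HH := H Λ hsub
  have hρ : (volume.withDensity fun u => ENNReal.ofReal (Real.exp (-(aT * |u| ^ n)))) =
    rhoM aT n := rfl
  rw [hρ] at HH
  unfold marg gibbs at HH
  have hKm : MeasurableSet K := hK.isClosed.measurableSet
  have hmap : Measurable (fun (φ : ↥Λ → ℝ) (y : ↥({o} : Finset V)) => φ ⟨y.1, hsub y.2⟩) := by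
    fun_prop
  rw [Measure.map_apply hmap hKm, Measure.smul_apply, smul_eq_mul] at HH
  set μ := (Measure.pi fun _ : ↥Λ => rhoM aT n).withDensity
      fun φ => ENNReal.ofReal (Real.exp (hamil J β Λ ξ φ)) with hμ
  have hZ : μ Set.univ = ∫⁻ φ, 1 * ENNReal.ofReal (Real.exp (hamil J β Λ ξ φ))
      ∂(Measure.pi fun _ : ↥Λ => rhoM aT n) := by
    rw [hμ, withDensity_apply _ MeasurableSet.univ, Measure.restrict_univ]
    simp only [one_mul]
  have hB : μ ((fun (φ : ↥Λ → ℝ) (y : ↥({o} : Finset V)) => φ ⟨y.1, hsub y.2⟩) ⁻¹' K) ≤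
      ∫⁻ φ, (if φ ⟨x 0, h0⟩ < m 0 then (1:ℝ≥0∞) else 0) *
        ENNReal.ofReal (Real.exp (hamil J β Λ ξ φ)) ∂(Measure.pi fun _ : ↥Λ => rhoM aT n) := by
    rw [hμ, withDensity_apply _ (hmap hKm), ← lintegral_indicator (hmap hKm)]
    apply lintegral_mono
    intro φ
    by_cases hφ : φ ∈ (fun (φ : ↥Λ → ℝ) (y : ↥({o} : Finset V)) => φ ⟨y.1, hsub y.2⟩) ⁻¹' K
    · rw [Set.indicator_of_mem hφ]
      simp only
      have h1 := hR _ hφ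
      have h2 := (norm_le_pi_norm (fun (y : ↥({o} : Finset V)) => φ ⟨y.1, hsub y.2⟩)
        ⟨o, Finset.mem_singleton_self o⟩).trans h1
      have h3 : φ ⟨x 0, h0⟩ = φ ⟨o, hsub (Finset.mem_singleton_self o)⟩ := by
        congr 1; exact Subtype.ext hx0
      rw [Real.norm_eq_abs] at h2
      rw [if_pos, one_mul]
      rw [h3, hm0]
      exact (le_abs_self _).trans_lt (h2.trans_lt hMR)
    · rw [Set.indicator_of_notMem hφ]
      exact zero_le
  rw [← hZ] at hbound2
  have hfin : ENNReal.ofReal (1 - 1/4) ≤ ENNReal.ofReal (1/2) := by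
    calc _ ≤ _ := HH
      _ ≤ (μ Set.univ)⁻¹ * (ENNReal.ofReal (1/2) * μ Set.univ) := by
        gcongr
        exact hB.trans hbound2
      _ = ENNReal.ofReal (1/2) * ((μ Set.univ)⁻¹ * μ Set.univ) := by ring
      _ ≤ ENNReal.ofReal (1/2) * 1 := by gcongr; exact ENNReal.inv_mul_le_one _
      _ = _ := mul_one _
  rw [ENNReal.ofReal_le_ofReal_iff (by norm_num)] at hfin
  norm_num at hfin
end

section
/- (Non-tightness for signed boundary conditions on ℤ.) Let n > 2, ã > 0, β > 0, let dρ(u) = e^{−ã|u|^n} du, and let G = (ℤ, {xy : |x − y| = 1}) with origin o = 0, equipped with the nearest-neighbour interactions J_G. Let ξ ∈ ℝ^ℤ be such that for every A ∈ (0,∞) there exists z ∈ ℤ with |ξ_z| > A^{(n−1)^{|z|}} (i.e. ξ ∉ Ξ). Then the family of measures (ν^ξ_{Λ,β,ρ,J_G})_{Λ finite ⊂ ℤ} is not tight: there exists a finite Λ' ⊂ ℤ such that the family of Λ'-marginals of ν^ξ_{Λ,β,ρ,J_G}, over finite Λ ⊇ Λ', is not uniformly tight. -/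
open MeasureTheory
open scoped ENNReal Classical

lemma chain_dbl (ψ : ℕ → ℝ) (m : ℕ) :
    ∑ i ∈ Finset.range (m+1), ∑ j ∈ Finset.range (m+1),
      (if i + 1 = j ∨ j + 1 = i then ψ i * ψ j else 0)
      = 2 * ∑ i ∈ Finset.range m, ψ i * ψ (i+1) := by
  induction m with
  | zero => simp
  | succ m ih =>
    rw [Finset.sum_range_succ]
    simp_rw [Finset.sum_range_succ _ (m+1)]
    rw [Finset.sum_add_distrib, ih]
    have h1 : ∑ i ∈ Finset.range (m+1),
        (if i + 1 = m+1 ∨ m+1 + 1 = i then ψ i * ψ (m+1) else 0) = ψ m * ψ (m+1) := by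
      rw [Finset.sum_eq_single m]
      · simp
      · intro b hb hbm
        rw [if_neg]
        simp at hb
        omega
      · simp
    have h2 : ∑ j ∈ Finset.range (m+1),
        (if m+1 + 1 = j ∨ j+1 = m+1 then ψ (m+1) * ψ j else 0) = ψ m * ψ (m+1) := by
      rw [Finset.sum_eq_single m]
      · simp [mul_comm]
      · intro b hb hbm
        rw [if_neg]
        simp at hb
        omega
      · simp
    rw [h1, h2, Finset.sum_range_succ]
    simp
    ring

noncomputable def LamS (s : ℤ) (N : ℕ) : Finset ℤ := (Finset.range N).image (fun i : ℕ => s * (i : ℤ))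

noncomputable def extC (Λ : Finset ℤ) (ξ : ℤ → ℝ) (φ : ↥Λ → ℝ) (z : ℤ) : ℝ :=
  if h : z ∈ Λ then φ ⟨z, h⟩ else ξ z

lemma extC_coe (Λ : Finset ℤ) (ξ : ℤ → ℝ) (φ : ↥Λ → ℝ) (x : ↥Λ) :
    extC Λ ξ φ x.1 = φ x := by simp [extC]

lemma mem_LamS {s : ℤ} (hs : s = 1 ∨ s = -1) (N : ℕ) (i : ℤ) :
    s * i ∈ LamS s N ↔ 0 ≤ i ∧ i < N := by
  unfold LamS
  simp only [Finset.mem_image, Finset.mem_range]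
  constructor
  · rintro ⟨j, hj, h⟩
    rcases hs with rfl | rfl <;> omega
  · rintro ⟨h1, h2⟩
    refine ⟨i.toNat, by omega, ?_⟩
    rw [Int.toNat_of_nonneg h1]

lemma sum_LamS {s : ℤ} (hs : s = 1 ∨ s = -1) (N : ℕ) (g : ℤ → ℝ) :
    ∑ x : ↥(LamS s N), g x.1 = ∑ i ∈ Finset.range N, g (s * (i : ℤ)) := by
  rw [Finset.sum_coe_sort (LamS s N) g, LamS, Finset.sum_image]
  intro a _ b _ h
  simp only at h
  rcases hs with rfl | rfl <;> omega

lemma tsum_bdry (Λ : Finset ℤ) (ξ : ℤ → ℝ) (x s : ℤ) (hs : s = 1 ∨ s = -1) :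
    ∑' y : {y : ℤ // y ∉ Λ}, (if |x - y.1| = 1 then (1:ℝ) else 0) * ξ y.1
      = (if x + s ∈ Λ then 0 else ξ (x + s)) + (if x - s ∈ Λ then 0 else ξ (x - s)) := by
  have h := tsum_subtype {y : ℤ | y ∉ Λ} (fun y => (if |x - y| = 1 then (1:ℝ) else 0) * ξ y)
  refine h.trans ?_
  rw [tsum_eq_sum (s := {x + s, x - s})]
  · rw [Finset.sum_pair (by omega)]
    have e1 : |x - (x + s)| = 1 := by rcases hs with rfl | rfl <;> simp
    have e2 : |x - (x - s)| = 1 := by rcases hs with rfl | rfl <;> simp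
    simp only [Set.indicator_apply, Set.mem_ofPred_eq, e1, e2]
    simp [ite_not]
  · intro b hb
    simp only [Finset.mem_insert, Finset.mem_singleton, not_or] at hb
    rw [Set.indicator_apply]
    split_ifs with h1 h2
    · exfalso
      rw [abs_eq (by norm_num)] at h2
      rcases hs with rfl | rfl <;> omega
    · simp
    · rfl

lemma hamil_eq (β : ℝ) (ξ : ℤ → ℝ) {s : ℤ} (hs : s = 1 ∨ s = -1) (m : ℕ)
    (φ : ↥(LamS s (m+1)) → ℝ) :
    hamil (fun x y => if |x - y| = 1 then 1 else 0) β (LamS s (m+1)) ξ φ =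
      β * (ξ (-s) * extC _ ξ φ 0 +
        ∑ i ∈ Finset.range (m+1), extC _ ξ φ (s * (i:ℤ)) * extC _ ξ φ (s * ((i+1 : ℕ):ℤ))) := by
  unfold hamil
  set Φ := extC (LamS s (m+1)) ξ φ with hΦ
  have hc : ∀ x, φ x = Φ x.1 := fun x => (extC_coe _ _ _ _).symm
  simp_rw [hc]
  congr 1
  have e1 : ∑ x : ↥(LamS s (m+1)), ∑ y : ↥(LamS s (m+1)),
      (if x.1 ≠ y.1 then (if |x.1 - y.1| = 1 then (1:ℝ) else 0) * Φ x * Φ y else 0)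
      = 2 * ∑ i ∈ Finset.range m, Φ (s * (i:ℤ)) * Φ (s * ((i+1 : ℕ):ℤ)) := by
    rw [← chain_dbl (fun i => Φ (s * (i:ℤ)))]
    rw [sum_LamS hs (m+1) (fun x => ∑ y : ↥(LamS s (m+1)),
      (if x ≠ y.1 then (if |x - y.1| = 1 then (1:ℝ) else 0) * Φ x * Φ y else 0))]
    refine Finset.sum_congr rfl fun i _ => ?_
    rw [sum_LamS hs (m+1) (fun y => 
      (if s * (i:ℤ) ≠ y then (if |s * (i:ℤ) - y| = 1 then (1:ℝ) else 0) * Φ (s * (i:ℤ)) * Φ y else 0))]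
    refine Finset.sum_congr rfl fun j _ => ?_
    by_cases h : i + 1 = j ∨ j + 1 = i
    · have h2 : |s * (i:ℤ) - s * (j:ℤ)| = 1 := by
        rw [abs_eq (by norm_num)]
        rcases hs with rfl | rfl <;> omega
      have h3 : s * (i:ℤ) ≠ s * (j:ℤ) := by
        intro h; rw [h] at h2; simp at h2
      simp [h, h2, h3]
    · have h2 : ¬ |s * (i:ℤ) - s * (j:ℤ)| = 1 := by
        rw [abs_eq (by norm_num)]
        rcases hs with rfl | rfl <;> omega
      simp [h, h2]
  rw [e1]
  have e2 : ∑ x : ↥(LamS s (m+1)), Φ x * ∑' y : {y : ℤ // y ∉ LamS s (m+1)},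
      (if |x.1 - y.1| = 1 then (1:ℝ) else 0) * ξ y.1 
      = ξ (-s) * Φ 0 + Φ (s * (m:ℤ)) * Φ (s * ((m+1 : ℕ):ℤ)) := by
    rw [sum_LamS hs (m+1) (fun x => Φ x * ∑' y : {y : ℤ // y ∉ LamS s (m+1)},
      (if |x - y.1| = 1 then (1:ℝ) else 0) * ξ y.1)]
    have e3 : ∀ i ∈ Finset.range (m+1), Φ (s * (i:ℤ)) * ∑' y : {y : ℤ // y ∉ LamS s (m+1)},
      (if |(s * (i:ℤ)) - y.1| = 1 then (1:ℝ) else 0) * ξ y.1 = 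
        (if i = m then Φ (s * (m:ℤ)) * Φ (s * ((m+1 : ℕ):ℤ)) else 0) + 
          (if i = 0 then ξ (-s) * Φ 0 else 0) := by
      intro i hi
      simp at hi
      rw [tsum_bdry _ _ _ s hs, mul_add]
      have a1 : s * (i:ℤ) + s = s * ((i:ℤ)+1) := by ring
      have a2 : s * (i:ℤ) - s = s * ((i:ℤ)-1) := by ring
      rw [a1, a2]
      simp only [mem_LamS hs]
      congr 1
      · by_cases h : i = m
        · subst h
          have : Φ (s * ((i+1 : ℕ):ℤ)) = ξ (s * ((i+1 : ℕ):ℤ)) := by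
            rw [hΦ, extC, dif_neg]
            rw [mem_LamS hs]; omega
          rw [this]
          simp
        · rw [if_pos (by push_cast; omega), if_neg h, mul_zero]
      · by_cases h : i = 0
        · subst h
          rw [if_neg (by omega), if_pos rfl]
          simp [mul_comm]
        · rw [if_pos (by push_cast; omega), if_neg h, mul_zero]
    rw [Finset.sum_congr rfl e3, Finset.sum_add_distrib]
    simp
    ring
  rw [e2, Finset.sum_range_succ]
  ring

noncomputable def LL (s : ℤ) (N k : ℕ) : Finset ↥(LamS s N) :=
  Finset.univ.filter (fun j => j.1.natAbs ≤ k)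

lemma natAbs_s {s : ℤ} (hs : s = 1 ∨ s = -1) (i : ℕ) : (s * (i:ℤ)).natAbs = i := by
  rcases hs with rfl | rfl <;> omega

lemma sum_LL {s : ℤ} (hs : s = 1 ∨ s = -1) (N k : ℕ) (hk : k < N) (ξ : ℤ → ℝ)
    (x : ↥(LamS s N) → ℝ) (y : ↥(LL s N k) → ℝ) (g : ℝ → ℝ) :
    ∑ j : ↥(LL s N k), g (y j) = ∑ i ∈ Finset.range (k+1),
      g (extC _ ξ (Function.updateFinset x (LL s N k) y) (s * (i:ℤ))) := by
  set φ := Function.updateFinset x (LL s N k) y with hφ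
  have h1 : ∀ j : ↥(LL s N k), y j = φ j.1 := by
    intro j
    simp [hφ, Function.updateFinset, j.2]
  simp_rw [h1]
  rw [Finset.sum_coe_sort (LL s N k) (fun j => g (φ j)), LL, Finset.sum_filter]
  simp_rw [← extC_coe _ ξ φ]
  rw [sum_LamS hs N (fun z => if z.natAbs ≤ k then g (extC _ ξ φ z) else 0)]
  simp_rw [natAbs_s hs]
  rw [← Finset.sum_filter]
  refine Finset.sum_congr ?_ fun _ _ => rfl
  ext i
  simp
  omega

lemma ext_update_gt {s : ℤ} (hs : s = 1 ∨ s = -1) (N k : ℕ) (ξ : ℤ → ℝ)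
    (x : ↥(LamS s N) → ℝ) (y : ↥(LL s N k) → ℝ) (i : ℕ) (hi : k < i) :
    extC _ ξ (Function.updateFinset x (LL s N k) y) (s * (i:ℤ)) = extC _ ξ x (s * (i:ℤ)) := by
  unfold extC
  split_ifs with h
  · rw [Function.updateFinset, dif_neg]
    simp [LL, natAbs_s hs]
    omega
  · rfl

lemma ext_update_le {s : ℤ} (hs : s = 1 ∨ s = -1) (N k : ℕ) (hk : k < N) (ξ : ℤ → ℝ)
    (x : ↥(LamS s N) → ℝ) (y : ↥(LL s N k) → ℝ) (i : ℕ) (hi : i ≤ k) :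
    ∃ j : ↥(LL s N k), j.1.1 = s * (i:ℤ) ∧
    extC _ ξ (Function.updateFinset x (LL s N k) y) (s * (i:ℤ)) = y j := by
  have h : s * (i:ℤ) ∈ LamS s N := by rw [mem_LamS hs]; omega
  have h2 : (⟨_, h⟩ : ↥(LamS s N)) ∈ LL s N k := by simp [LL, natAbs_s hs]; omega
  refine ⟨⟨_, h2⟩, rfl, ?_⟩
  rw [extC, dif_pos h, Function.updateFinset, dif_pos h2]

lemma measurable_extC (Λ : Finset ℤ) (ξ : ℤ → ℝ) (z : ℤ) :
    Measurable (fun φ : ↥Λ → ℝ => extC Λ ξ φ z) := by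
  unfold extC
  split_ifs
  · exact measurable_pi_apply _
  · exact measurable_const

lemma card_LL {s : ℤ} (hs : s = 1 ∨ s = -1) (N k : ℕ) (hk : k < N) : (LL s N k).card = k + 1 := by
  have := sum_LL hs N k hk (fun _ => 0) (fun _ => 0) (fun _ => 0) (fun _ => 1)
  simp at this
  exact_mod_cast this

lemma sum_prod_le (z : ℕ → ℝ) (X w : ℝ) (hw : |w| ≤ X) (k : ℕ) :
    w * z 0 + ∑ i ∈ Finset.range k, z i * z (i+1) ≤
      ∑ i ∈ Finset.range (k+1), ((z i)^2 + X * |z i|) - (z k)^2/2 - (z 0)^2 / 2 := by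
  induction k with
  | zero =>
    simp
    calc w * z 0 ≤ |w * z 0| := le_abs_self _
      _ = |w| * |z 0| := abs_mul _ _
      _ ≤ X * |z 0| := by gcongr
      _ ≤ _ := by nlinarith
  | succ k ih =>
    rw [Finset.sum_range_succ, Finset.sum_range_succ _ (k+1)]
    have : 0 ≤ X * |z (k+1)| := mul_nonneg ((abs_nonneg w).trans hw) (abs_nonneg _)
    nlinarith [sq_nonneg (z k - z (k+1))]

lemma sum_prod_le' (z : ℕ → ℝ) (X w : ℝ) (hw : |w| ≤ X) (k : ℕ) :
    w * z 0 + ∑ i ∈ Finset.range k, z i * z (i+1) ≤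
      ∑ i ∈ Finset.range (k+1), ((z i)^2 + X * |z i|) := by
  have := sum_prod_le z X w hw k
  linarith [sq_nonneg (z k), sq_nonneg (z 0)]

lemma key_step (β X C T T1 a q σ : ℝ) (ξ : ℤ → ℝ) (ρ : Measure ℝ) [SigmaFinite ρ]
    (hβ : 0 < β) {s : ℤ} (hs : s = 1 ∨ s = -1) (hσ : σ = 1 ∨ σ = -1) (hX : |ξ (-s)| ≤ X)
    (hint : Integrable (fun u => Real.exp (β * (u^2 + X * |u|))) ρ)
    (hC : ∫ u, Real.exp (β * (u^2 + X * |u|)) ∂ρ ≤ C)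
    (h01 : ENNReal.ofReal (Real.exp (-a)) ≤ ρ {u | 0 ≤ σ * u ∧ σ * u ≤ 1})
    (h23 : ENNReal.ofReal (Real.exp (-a) * q) ≤ ρ {u | 2 * T ≤ σ * u ∧ σ * u ≤ 3 * T})
    (hq : 0 ≤ q)
    (hT : 1 ≤ T) (hT1 : 0 < T1) (m k : ℕ) (hk : k < m + 1)
    (hnum : ∀ t, T1 ≤ t → C ^ (k+1) * Real.exp (β * (T * t)) ≤
      (1/8)^(k+1) * (Real.exp (β * (2 * T * t - 3 * X * T)) * (Real.exp (-a) ^ (k+1) * q))) :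
    ∫⁻ φ : ↥(LamS s (m+1)) → ℝ, Set.indicator {φ | σ * extC _ ξ φ (s * (k:ℤ)) < T ∧
        T1 ≤ σ * extC _ ξ φ (s * ((k+1:ℕ):ℤ))}
        (fun φ => ENNReal.ofReal (Real.exp
          (hamil (fun x y => if |x - y| = 1 then 1 else 0) β (LamS s (m+1)) ξ φ))) φ
        ∂(Measure.pi fun _ => ρ) ≤
    ∫⁻ φ : ↥(LamS s (m+1)) → ℝ, ENNReal.ofReal ((1/8)^(k+1)) * ENNReal.ofReal (Real.exp
          (hamil (fun x y => if |x - y| = 1 then 1 else 0) β (LamS s (m+1)) ξ φ))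
        ∂(Measure.pi fun _ => ρ) := by
  have hX0 : 0 ≤ X := (abs_nonneg _).trans hX
  have hC0 : 0 ≤ C := le_trans (integral_nonneg fun _ => (Real.exp_pos _).le) hC
  have hσ2 : σ * σ = 1 := by rcases hσ with rfl | rfl <;> norm_num
  simp_rw [hamil_eq β ξ hs m]
  have hmf : Measurable (fun φ : ↥(LamS s (m+1)) → ℝ => ENNReal.ofReal (Real.exp
      (β * (ξ (-s) * extC _ ξ φ 0 + ∑ i ∈ Finset.range (m+1),
        extC _ ξ φ (s * (i:ℤ)) * extC _ ξ φ (s * ((i+1 : ℕ):ℤ)))))) := by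
    refine ENNReal.measurable_ofReal.comp (Real.measurable_exp.comp (measurable_const.mul ?_))
    refine (measurable_const.mul (measurable_extC _ _ _)).add ?_
    exact Finset.measurable_sum _ fun i _ => (measurable_extC _ _ _).mul (measurable_extC _ _ _)
  refine lintegral_le_of_lmarginal_le (μ := fun _ => ρ) (LL s (m+1) k) ?_ (hmf.const_mul _) ?_
  · refine hmf.indicator (MeasurableSet.inter ?_ ?_)
    · exact measurableSet_lt ((measurable_extC _ _ _).const_mul _) measurable_const
    · exact measurableSet_le measurable_const ((measurable_extC _ _ _).const_mul _)
  intro x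
  unfold lmarginal
  -- tail quantities
  set t : ℝ := extC _ ξ x (s * ((k+1:ℕ):ℤ)) with ht
  set R : ℝ := ∑ i ∈ Finset.Ico (k+1) (m+1),
        extC _ ξ x (s * (i:ℤ)) * extC _ ξ x (s * ((i+1 : ℕ):ℤ)) with hR
  by_cases htT : T1 ≤ σ * t
  swap
  · refine le_trans (le_of_eq ?_) (zero_le)
    rw [lintegral_eq_zero_iff']
    · refine Filter.Eventually.of_forall fun y => ?_
      simp only [Pi.zero_apply]
      rw [Set.indicator_of_notMem]
      intro hmem
      apply htT
      have := hmem.2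
      rwa [ext_update_gt hs _ _ _ _ _ _ (Nat.lt_succ_self k)] at this
    · refine Measurable.aemeasurable ?_
      refine Measurable.comp (hmf.indicator (MeasurableSet.inter ?_ ?_)) ?_
      · exact measurableSet_lt ((measurable_extC _ _ _).const_mul _) measurable_const
      · exact measurableSet_le measurable_const ((measurable_extC _ _ _).const_mul _)
      · exact measurable_updateFinset
  -- decomposition of the energy
  have hdec : ∀ y : ↥(LL s (m+1) k) → ℝ,
      let z : ℕ → ℝ := fun i => extC _ ξ (Function.updateFinset x (LL s (m+1) k) y) (s * (i:ℤ))
      ξ (-s) * extC _ ξ (Function.updateFinset x (LL s (m+1) k) y) 0 +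
        ∑ i ∈ Finset.range (m+1),
          extC _ ξ (Function.updateFinset x (LL s (m+1) k) y) (s * (i:ℤ)) *
          extC _ ξ (Function.updateFinset x (LL s (m+1) k) y) (s * ((i+1 : ℕ):ℤ))
      = (ξ (-s) * z 0 + ∑ i ∈ Finset.range k, z i * z (i+1)) + z k * t + R := by
    intro y z
    have e0 : extC _ ξ (Function.updateFinset x (LL s (m+1) k) y) 0 = z 0 := by simp [z]
    rw [e0, Finset.range_eq_Ico, ← Finset.sum_Ico_consecutive _ (Nat.zero_le (k+1)) (by omega : k+1 ≤ m+1),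
      ← Finset.range_eq_Ico, Finset.sum_range_succ, ext_update_gt hs _ _ _ _ _ _ (Nat.lt_succ_self k)]
    rw [← add_assoc, ← add_assoc]
    congr 1
    refine Finset.sum_congr rfl fun i hi => ?_
    simp at hi
    rw [ext_update_gt hs _ _ _ _ _ _ (by omega), ext_update_gt hs _ _ _ _ _ _ (by omega)]
  have ht0 : 0 < σ * t := hT1.trans_le htT
  -- upper bound
  have hup : ∫⁻ y, Set.indicator {φ | σ * extC _ ξ φ (s * (k:ℤ)) < T ∧
        T1 ≤ σ * extC _ ξ φ (s * ((k+1:ℕ):ℤ))}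
        (fun φ => ENNReal.ofReal (Real.exp
      (β * (ξ (-s) * extC _ ξ φ 0 + ∑ i ∈ Finset.range (m+1),
        extC _ ξ φ (s * (i:ℤ)) * extC _ ξ φ (s * ((i+1 : ℕ):ℤ))))))
        (Function.updateFinset x (LL s (m+1) k) y) ∂(Measure.pi fun _ : ↥(LL s (m+1) k) => ρ)
      ≤ ENNReal.ofReal (Real.exp (β * R) * (C ^ (k+1) * Real.exp (β * (T * (σ * t))))) := by
    calc _ ≤ ∫⁻ y, ENNReal.ofReal (Real.exp (β * R) * Real.exp (β * (T * (σ * t)))) *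
          ENNReal.ofReal (∏ j, Real.exp (β * ((y j)^2 + X * |y j|)))
            ∂(Measure.pi fun _ : ↥(LL s (m+1) k) => ρ) := by
          refine lintegral_mono fun y => ?_
          refine Set.indicator_apply_le' (fun hmem => ?_) (fun _ => zero_le)
          have hm := hmem.1
          rw [← ENNReal.ofReal_mul (by positivity), ← Real.exp_sum, ← Real.exp_add, ← Real.exp_add,
            ← Finset.mul_sum, ← mul_add, ← mul_add]
          refine ENNReal.ofReal_le_ofReal (Real.exp_le_exp.2 (mul_le_mul_of_nonneg_left ?_ hβ.le))
          rw [hdec y, sum_LL hs (m+1) k hk ξ x y (fun u => u^2 + X * |u|)]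
          have h1 := sum_prod_le' (fun i : ℕ => extC _ ξ
            (Function.updateFinset x (LL s (m+1) k) y) (s * (i:ℤ))) X _ hX k
          have h2 : extC _ ξ (Function.updateFinset x (LL s (m+1) k) y) (s * (k:ℤ)) * t
              ≤ T * (σ * t) := by
            calc _ = (σ * extC _ ξ (Function.updateFinset x (LL s (m+1) k) y) (s * (k:ℤ)))
                  * (σ * t) := by linear_combination (-(extC _ ξ (Function.updateFinset x (LL s (m+1) k) y) (s * (k:ℤ))) * t) * hσ2
              _ ≤ _ := mul_le_mul_of_nonneg_right hm.le ht0.le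
          exact le_trans (add_le_add (add_le_add h1 h2) le_rfl) (le_of_eq (by ring))
      _ = ENNReal.ofReal (Real.exp (β * R) * Real.exp (β * (T * (σ * t)))) *
          ENNReal.ofReal (∏ j : ↥(LL s (m+1) k), ∫ u, Real.exp (β * (u^2 + X * |u|)) ∂ρ) := by
          rw [lintegral_const_mul' _ _ ENNReal.ofReal_ne_top]
          congr 1
          rw [← ofReal_integral_eq_lintegral_ofReal]
          · rw [integral_fintype_prod_eq_prod (fun (_ : ↥(LL s (m+1) k)) u => Real.exp (β * (u^2 + X * |u|)))]
          · exact Integrable.fintype_prod (f := fun (_ : ↥(LL s (m+1) k)) u => Real.exp (β * (u^2 + X * |u|))) (fun _ => hint)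
          · exact Filter.Eventually.of_forall fun y => Finset.prod_nonneg fun _ _ => (Real.exp_pos _).le
      _ ≤ _ := by
          rw [← ENNReal.ofReal_mul (by positivity), mul_assoc, mul_comm (Real.exp (β * (T * (σ * t))))]
          refine ENNReal.ofReal_le_ofReal ?_
          gcongr
          rw [Finset.prod_const, Finset.card_univ, Fintype.card_coe, card_LL hs _ _ hk]
          gcongr
  -- lower bound
  have hlow : ENNReal.ofReal (Real.exp (β * R) * (Real.exp (β * (2 * T * (σ * t) - 3 * X * T)) *
        (Real.exp (-a) ^ (k+1) * q))) ≤
      ∫⁻ y, ENNReal.ofReal (Real.exp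
      (β * (ξ (-s) * extC _ ξ (Function.updateFinset x (LL s (m+1) k) y) 0 +
        ∑ i ∈ Finset.range (m+1),
          extC _ ξ (Function.updateFinset x (LL s (m+1) k) y) (s * (i:ℤ)) *
          extC _ ξ (Function.updateFinset x (LL s (m+1) k) y) (s * ((i+1 : ℕ):ℤ)))))
        ∂(Measure.pi fun _ : ↥(LL s (m+1) k) => ρ) := by
    obtain ⟨jk, hjk, -⟩ := ext_update_le hs (m+1) k hk ξ x (fun _ => 0) k le_rfl
    set S : ↥(LL s (m+1) k) → Set ℝ := fun j => if j = jk then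
      {u | 2 * T ≤ σ * u ∧ σ * u ≤ 3 * T} else {u | 0 ≤ σ * u ∧ σ * u ≤ 1} with hS
    have hSm : MeasurableSet (Set.univ.pi S) := by
      refine MeasurableSet.univ_pi fun j => ?_
      simp only [hS]
      split_ifs
      · exact (measurableSet_le measurable_const (measurable_id.const_mul _)).inter
          (measurableSet_le (measurable_id.const_mul _) measurable_const)
      · exact (measurableSet_le measurable_const (measurable_id.const_mul _)).inter
          (measurableSet_le (measurable_id.const_mul _) measurable_const)
    calc _ = ENNReal.ofReal (Real.exp (β * R) * Real.exp (β * (2 * T * (σ * t) - 3 * X * T))) *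
          ENNReal.ofReal (∏ j : ↥(LL s (m+1) k), (Real.exp (-a) * if j = jk then q else 1)) := by
          rw [← ENNReal.ofReal_mul (by positivity), Finset.prod_mul_distrib, Finset.prod_const,
            Finset.card_univ, Fintype.card_coe, card_LL hs _ _ hk, Finset.prod_ite_eq']
          simp [mul_assoc]
      _ ≤ ENNReal.ofReal (Real.exp (β * R) * Real.exp (β * (2 * T * (σ * t) - 3 * X * T))) *
          (Measure.pi fun _ : ↥(LL s (m+1) k) => ρ) (Set.univ.pi S) := by
          gcongr
          rw [Measure.pi_pi, ENNReal.ofReal_prod_of_nonneg]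
          · refine Finset.prod_le_prod' fun j _ => ?_
            simp only [hS]
            split_ifs
            · exact h23
            · simpa using h01
          · intro j _
            split_ifs <;> positivity
      _ = ∫⁻ y in Set.univ.pi S, ENNReal.ofReal (Real.exp (β * R) *
            Real.exp (β * (2 * T * (σ * t) - 3 * X * T)))
            ∂(Measure.pi fun _ : ↥(LL s (m+1) k) => ρ) := by
          rw [lintegral_const, Measure.restrict_apply_univ]
      _ ≤ ∫⁻ y in Set.univ.pi S, _ ∂(Measure.pi fun _ : ↥(LL s (m+1) k) => ρ) := by
          refine setLIntegral_mono' hSm fun y hy => ?_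
          rw [← Real.exp_add, ← mul_add]
          refine ENNReal.ofReal_le_ofReal (Real.exp_le_exp.2 (mul_le_mul_of_nonneg_left ?_ hβ.le))
          rw [hdec y]
          set z : ℕ → ℝ := fun i => extC _ ξ (Function.updateFinset x (LL s (m+1) k) y) (s * (i:ℤ)) with hz
          have hz1 : ∀ i ≤ k, 0 ≤ σ * z i ∧ σ * z i ≤ 3 * T ∧ (i = k → 2 * T ≤ σ * z i) := by
            intro i hi
            obtain ⟨j, hj, hzj⟩ := ext_update_le hs (m+1) k hk ξ x y i hi
            have hyj := hy j (Set.mem_univ _)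
            have : z i = y j := hzj
            rw [this]
            simp only [hS] at hyj
            split_ifs at hyj with hjj
            · exact ⟨by linarith [hyj.1], hyj.2, fun _ => hyj.1⟩
            · refine ⟨hyj.1, by linarith [hyj.2], fun hik => absurd ?_ hjj⟩
              subst hik
              exact Subtype.ext (Subtype.ext (hj.trans hjk.symm))
          have h1 : 0 ≤ ∑ i ∈ Finset.range k, z i * z (i+1) := by
            refine Finset.sum_nonneg fun i hi => ?_
            simp at hi
            have := mul_nonneg (hz1 i (by omega)).1 (hz1 (i+1) (by omega)).1
            calc (0:ℝ) ≤ _ := this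
              _ = _ := by linear_combination (z i * z (i+1)) * hσ2
          have h2 : 2 * T * (σ * t) ≤ z k * t := by
            calc _ ≤ (σ * z k) * (σ * t) := mul_le_mul_of_nonneg_right ((hz1 k le_rfl).2.2 rfl) ht0.le
              _ = _ := by linear_combination (z k * t) * hσ2
          have h3 : - (3 * X * T) ≤ ξ (-s) * z 0 := by
            have h4 := hz1 0 (Nat.zero_le _)
            have : |z 0| ≤ 3 * T := by
              rw [abs_le]
              rcases hσ with rfl | rfl <;> constructor <;> linarith [h4.1, h4.2.1]
            have h5 : |ξ (-s) * z 0| ≤ X * (3 * T) := by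
              rw [abs_mul]; gcongr
            linarith [(abs_le.1 h5).1]
          linarith
      _ ≤ _ := setLIntegral_le_lintegral _ _
  refine hup.trans ?_
  rw [lintegral_const_mul' _ _ ENNReal.ofReal_ne_top]
  refine le_trans ?_ (mul_le_mul_right hlow _)
  rw [← ENNReal.ofReal_mul (by positivity)]
  refine ENNReal.ofReal_le_ofReal ?_
  have := mul_le_mul_of_nonneg_left (hnum _ htT) (Real.exp_pos (β * R)).le
  linarith

lemma int_rho (n a β X : ℝ) (hn : 2 < n) (ha : 0 < a) (hβ : 0 < β) (hX : 0 ≤ X) :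
    Integrable (fun u : ℝ => Real.exp (β * (u^2 + X * |u|)))
      (volume.withDensity fun u => ENNReal.ofReal (Real.exp (-(a * |u| ^ n)))) := by
  rw [integrable_withDensity_iff (by fun_prop) (by simp)]
  -- choose a large radius
  obtain ⟨r, hr1, hr2⟩ : ∃ r : ℝ, 1 ≤ r ∧ ∀ v, r ≤ v → β + β * X + 1 ≤ a * v ^ (n - 2) := by
    have h := (tendsto_rpow_atTop (by linarith : 0 < n - 2)).const_mul_atTop ha
    obtain ⟨r, hr⟩ := (Filter.eventually_atTop.1 (h.eventually_ge_atTop (β + β * X + 1)))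
    exact ⟨max r 1, le_max_right _ _, fun v hv => hr v ((le_max_left _ _).trans hv)⟩
  have hbd : ∀ u : ℝ, β * (u^2 + X * |u|) + -(a * |u| ^ n) ≤
      (β * (r^2 + X * r) + r^2) + -1 * u^2 := by
    intro u
    rw [← sq_abs u]
    set v := |u|
    have hv : 0 ≤ v := abs_nonneg u
    rcases le_total v r with h | h
    · have h1 : 0 ≤ a * v ^ n := by positivity
      have h2 : v^2 ≤ r^2 := by gcongr
      have h3 : β * (v^2 + X * v) ≤ β * (r^2 + X * r) := by gcongr
      linarith
    · have h1 := hr2 v h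
      have hv0 : 0 < v := by linarith
      have h2 : v ^ n = v ^ (n-2) * v^2 := by
        rw [← Real.rpow_natCast, ← Real.rpow_add hv0]; norm_num
      have h3 : (β + β * X + 1) * v^2 ≤ a * v ^ n := by
        rw [h2, ← mul_assoc]; gcongr
      have h4 : X * v ≤ X * v^2 := by
        gcongr; nlinarith
      have h5 : β * (X * v) ≤ β * (X * v^2) := by gcongr
      have h6 : 0 ≤ β * (r^2 + X * r) + r^2 := by positivity
      nlinarith
  refine Integrable.mono' ((integrable_exp_neg_mul_sq (b := 1) one_pos).const_mul
    (Real.exp (β * (r^2 + X * r) + r^2))) ?_ ?_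
  · exact Measurable.aestronglyMeasurable (by fun_prop)
  · refine Filter.Eventually.of_forall fun u => ?_
    rw [ENNReal.toReal_ofReal (Real.exp_pos _).le, ← Real.exp_add, ← Real.exp_add,
      Real.norm_of_nonneg (Real.exp_pos _).le, Real.exp_le_exp]
    exact hbd u

lemma rho_lower (n a p q σ : ℝ) (hn : 2 < n) (ha : 0 < a) (hσ : σ = 1 ∨ σ = -1)
    (hp : 0 ≤ p) (hpq : p + 1 ≤ q) :
    ENNReal.ofReal (Real.exp (-(a * q ^ n))) ≤
      (volume.withDensity fun u => ENNReal.ofReal (Real.exp (-(a * |u| ^ n))))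
        {u : ℝ | p ≤ σ * u ∧ σ * u ≤ q} := by
  have hm : MeasurableSet {u : ℝ | p ≤ σ * u ∧ σ * u ≤ q} :=
    (measurableSet_le measurable_const (measurable_id.const_mul _)).inter
          (measurableSet_le (measurable_id.const_mul _) measurable_const)
  rw [withDensity_apply _ hm]
  have hv : 1 ≤ volume {u : ℝ | p ≤ σ * u ∧ σ * u ≤ q} := by
    rcases hσ with rfl | rfl
    · have : {u : ℝ | p ≤ 1 * u ∧ 1 * u ≤ q} = Set.Icc p q := by ext; simp
      rw [this, Real.volume_Icc, ENNReal.one_le_ofReal]; linarith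
    · have : {u : ℝ | p ≤ -1 * u ∧ -1 * u ≤ q} = Set.Icc (-q) (-p) := by
        ext u; simp only [Set.mem_ofPred_eq, Set.mem_Icc]
        constructor <;> rintro ⟨h1, h2⟩ <;> constructor <;> linarith
      rw [this, Real.volume_Icc, ENNReal.one_le_ofReal]; linarith
  calc _ ≤ ENNReal.ofReal (Real.exp (-(a * q ^ n))) * volume {u : ℝ | p ≤ σ * u ∧ σ * u ≤ q} :=
        le_mul_of_one_le_right zero_le hv
    _ = ∫⁻ u in {u : ℝ | p ≤ σ * u ∧ σ * u ≤ q}, ENNReal.ofReal (Real.exp (-(a * q ^ n))) := by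
        rw [lintegral_const, Measure.restrict_apply_univ]
    _ ≤ _ := by
        refine setLIntegral_mono' hm fun u hu => ?_
        refine ENNReal.ofReal_le_ofReal (Real.exp_le_exp.2 (neg_le_neg ?_))
        have : |u| ≤ q := by
          rw [abs_le]
          have h1 := hu.1
          have h2 := hu.2
          rcases hσ with rfl | rfl <;> constructor <;> linarith
        have := Real.rpow_le_rpow (abs_nonneg u) this (by linarith : 0 ≤ n)
        gcongr

noncomputable def Tseq (n B T0 : ℝ) : ℕ → ℝ
  | 0 => T0
  | k+1 => B * Tseq n B T0 k ^ (n - 1)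

lemma Tseq_ge (n B T0 E : ℝ) (hn : 2 < n) (hB : 1 ≤ B) (h1 : 1 ≤ T0) (hE : 0 ≤ E) (hE0 : E ≤ T0)
    (h2 : 2 ≤ T0 ^ (n - 2)) (k : ℕ) : T0 ≤ Tseq n B T0 k ∧ (k+1) * E ≤ Tseq n B T0 k := by
  induction k with
  | zero => simp [Tseq, hE0]
  | succ k ih =>
    have hp : 0 < Tseq n B T0 k := by linarith [ih.1]
    have h3 : T0 ^ (n-2) ≤ Tseq n B T0 k ^ (n-2) :=
      Real.rpow_le_rpow (by linarith) ih.1 (by linarith)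
    have h4 : Tseq n B T0 k ^ (n-1) = Tseq n B T0 k ^ (n-2) * Tseq n B T0 k := by
      rw [← Real.rpow_add_one hp.ne']; congr 1; ring
    have h5 : 2 * Tseq n B T0 k ≤ Tseq n B T0 (k+1) := by
      show _ ≤ B * Tseq n B T0 k ^ (n - 1)
      calc 2 * Tseq n B T0 k ≤ Tseq n B T0 k ^ (n-1) := by
            rw [h4]; gcongr; linarith
        _ ≤ _ := le_mul_of_one_le_left (by positivity) hB
    refine ⟨by linarith [ih.1], ?_⟩
    push_cast
    nlinarith [ih.2, mul_nonneg (Nat.cast_nonneg (α := ℝ) k) hE]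

lemma Tseq_eq (n B T0 : ℝ) (hn : 2 < n) (hB : 1 ≤ B) (h1 : 0 < T0) (k : ℕ) :
    0 < Tseq n B T0 k ∧ 
    B ^ (1 / (n-2)) * Tseq n B T0 k = (B ^ (1/(n-2)) * T0) ^ ((n-1)^k) := by
  induction k with
  | zero => simp [Tseq, h1]
  | succ k ih =>
    have hb : 0 < B ^ (1/(n-2)) := Real.rpow_pos_of_pos (by linarith) _
    have hp := ih.1
    refine ⟨?_, ?_⟩
    · show 0 < B * Tseq n B T0 k ^ (n - 1)
      positivity
    rw [pow_succ, Real.rpow_mul (by positivity), ← ih.2, Real.mul_rpow hb.le hp.le]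
    show B ^ (1/(n-2)) * (B * Tseq n B T0 k ^ (n - 1)) = _
    rw [← mul_assoc]
    congr 1
    rw [← Real.rpow_mul (by linarith), ← Real.rpow_add_one (by linarith)]
    congr 1
    have : n - 2 ≠ 0 := by linarith
    field_simp
    ring

lemma Tseq_le (n B T0 : ℝ) (hn : 2 < n) (hB : 1 ≤ B) (h1 : 0 < T0) (k : ℕ) :
    Tseq n B T0 k ≤ (B ^ (1/(n-2)) * T0) ^ ((n-1)^k) := by
  obtain ⟨h, h2⟩ := Tseq_eq n B T0 hn hB h1 k
  rw [← h2]
  refine le_mul_of_one_le_left h.le (Real.one_le_rpow hB ?_)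
  have : 0 < n - 2 := by linarith
  positivity

lemma exists_cross (g T : ℕ → ℝ) (N : ℕ) (h0 : g 0 < T 0) (hN : T N ≤ g N) :
    ∃ k < N, g k < T k ∧ T (k+1) ≤ g (k+1) := by
  by_contra! hcon
  have : ∀ k ≤ N, g k < T k := by
    intro k
    induction k with
    | zero => intro _; exact h0
    | succ k ih => intro hk; exact hcon k (by omega) (ih (by omega))
  linarith [this N le_rfl]

lemma geom_bd (N : ℕ) : ∑ k ∈ Finset.range N, ((1:ℝ)/8)^(k+1) ≤ 1/7 := by
  have : ∑ k ∈ Finset.range N, ((1:ℝ)/8)^(k+1) = 1/7 - (1/7) * (1/8)^N := by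
    induction N with
    | zero => simp
    | succ N ih => rw [Finset.sum_range_succ, ih, pow_succ]; ring
  rw [this]
  have : (0:ℝ) ≤ (1/7) * (1/8)^N := by positivity
  linarith

/-- Proposition `Anti-tightness mixed`: non-tightness for signed
boundary conditions on `ℤ`. Let `n > 2`, `ã > 0`, `β > 0`, `dρ(u) = e^(-ã|u|^n) du`,
and take the nearest-neighbour interactions on `ℤ`. If `ξ ∉ Ξ` (i.e. for every `A > 0`
there exists `z` with `|ξ_z| > A^((n-1)^|z|)`), then the family
`(ν^ξ_{Λ,β,ρ,J_G})_Λ` is not tight: there is a finite `Λ' ⊆ ℤ` such that the family of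
`Λ'`-marginals over finite `Λ ⊇ Λ'` is not uniformly tight. -/
theorem stmt10 (n aT β : ℝ) (hn : 2 < n) (haT : 0 < aT) (hβ : 0 < β)
    (ξ : ℤ → ℝ)
    (hξ : ∀ A : ℝ, 0 < A → ∃ z : ℤ, A ^ ((n - 1) ^ z.natAbs) < |ξ z|) :
    ∃ Λ' : Finset ℤ, ¬ (∀ ε : ℝ, 0 < ε → ∃ K : Set (↥Λ' → ℝ), IsCompact K ∧
      ∀ (Λ : Finset ℤ) (h : Λ' ⊆ Λ),
        ENNReal.ofReal (1 - ε) ≤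
          marg h (gibbs (fun x y => if |x - y| = 1 then 1 else 0) β
            (volume.withDensity fun u => ENNReal.ofReal (Real.exp (-(aT * |u| ^ n))))
            Λ ξ) K) := by
  refine ⟨{0}, fun htight => ?_⟩
  obtain ⟨K, hK, hKt⟩ := htight (1/2) (by norm_num)
  obtain ⟨M, hM⟩ : ∃ M : ℝ, ∀ f ∈ K, ∀ i, |f i| ≤ M := by
    obtain ⟨M, hM⟩ := hK.isBounded.exists_norm_le
    exact ⟨M, fun f hf i => (norm_le_pi_norm f i).trans (hM f hf)⟩
  set ρ : Measure ℝ := volume.withDensity fun u => ENNReal.ofReal (Real.exp (-(aT * |u| ^ n))) with hρ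
  have : SigmaFinite ρ := SigmaFinite.withDensity_ofReal _
  set X : ℝ := |ξ 1| + |ξ (-1)| with hX
  have hX0 : 0 ≤ X := by positivity
  have hint := int_rho n aT β X hn haT hβ hX0
  rw [← hρ] at hint
  set C : ℝ := (∫ u, Real.exp (β * (u^2 + X * |u|)) ∂ρ) + 1 with hC
  have hC1 : 1 ≤ C := by
    have : 0 ≤ ∫ u, Real.exp (β * (u^2 + X * |u|)) ∂ρ := integral_nonneg fun _ => (Real.exp_pos _).le
    linarith
  set E : ℝ := Real.log (8 * C * Real.exp aT) with hE
  have hE1 : 1 ≤ 8 * C * Real.exp aT := by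
    have := Real.one_le_exp haT.le
    nlinarith
  have hE0 : 0 ≤ E := Real.log_nonneg hE1
  set B : ℝ := (aT * 3 ^ n + 3 * β * X + 1) / β + 1 with hB
  have h3n : (0:ℝ) < 3 ^ n := by positivity
  have hB1 : 1 ≤ B := by
    have : 0 ≤ (aT * 3 ^ n + 3 * β * X + 1) / β := by positivity
    linarith
  have hBβ : aT * 3 ^ n + 3 * β * X + 1 ≤ β * B := by
    have h : β * B = (aT * 3 ^ n + 3 * β * X + 1) + β := by
      rw [hB]
      field_simp
    linarith
  obtain ⟨T0, hT01, hT0E, hT0M, hT02, hT0ξ⟩ : ∃ T0 : ℝ, 1 ≤ T0 ∧ E ≤ T0 ∧ M < T0 ∧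
      2 ≤ T0 ^ (n-2) ∧ |ξ 0| ≤ T0 := by
    have h := (tendsto_rpow_atTop (by linarith : 0 < n - 2)).eventually_ge_atTop 2
    exact ((Filter.eventually_ge_atTop 1).and ((Filter.eventually_ge_atTop E).and
      ((Filter.eventually_gt_atTop M).and (h.and (Filter.eventually_ge_atTop |ξ 0|))))).exists
  have hTge := Tseq_ge n B T0 E hn hB1 hT01 hE0 hT0E hT02
  have hTle := Tseq_le n B T0 hn hB1 (by linarith)
  set T := Tseq n B T0 with hT
  have hA : 0 < B ^ (1/(n-2)) * T0 := by
    have := Real.rpow_pos_of_pos (by linarith : 0 < B) (1/(n-2))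
    positivity
  obtain ⟨z, hz⟩ := hξ _ hA
  have hz2 : T z.natAbs < |ξ z| := (hTle _).trans_lt hz
  obtain ⟨s, hs, hsz⟩ : ∃ s : ℤ, (s = 1 ∨ s = -1) ∧ z = s * (z.natAbs : ℤ) := by
    rcases le_total 0 z with h | h
    · exact ⟨1, Or.inl rfl, by omega⟩
    · exact ⟨-1, Or.inr rfl, by omega⟩
  obtain ⟨σ, hσ, hσξ⟩ : ∃ σ : ℝ, (σ = 1 ∨ σ = -1) ∧ σ * ξ z = |ξ z| := by
    rcases le_total 0 (ξ z) with h | h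
    · exact ⟨1, Or.inl rfl, by rw [abs_of_nonneg h]; ring⟩
    · exact ⟨-1, Or.inr rfl, by rw [abs_of_nonpos h]; ring⟩
  obtain ⟨m, hm⟩ : ∃ m, z.natAbs = m + 1 := by
    refine Nat.exists_eq_succ_of_ne_zero fun h0 => ?_
    have : z = 0 := by omega
    rw [h0, this] at hz2
    have : T 0 = T0 := rfl
    linarith
  rw [hm] at hsz hz2
  have hXs : |ξ (-s)| ≤ X := by
    rcases hs with rfl | rfl
    · rw [hX]; linarith [abs_nonneg (ξ 1)]
    · rw [hX, neg_neg]; linarith [abs_nonneg (ξ (-1))]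
  have h0 : (0:ℤ) ∈ LamS s (m+1) := by
    have := mem_LamS hs (m+1) 0
    rw [mul_zero] at this
    rw [this]; omega
  have hsub : ({0} : Finset ℤ) ⊆ LamS s (m+1) := by simpa using h0
  have hfin := hKt (LamS s (m+1)) hsub
  set f : (↥(LamS s (m+1)) → ℝ) → ℝ≥0∞ := fun φ => ENNReal.ofReal (Real.exp
          (hamil (fun x y => if |x - y| = 1 then 1 else 0) β (LamS s (m+1)) ξ φ)) with hf
  set π : Measure (↥(LamS s (m+1)) → ℝ) := Measure.pi fun _ => ρ with hπ
  set Bk : ℕ → Set (↥(LamS s (m+1)) → ℝ) := fun k => {φ | σ * extC _ ξ φ (s * (k:ℤ)) < T k ∧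
        T (k+1) ≤ σ * extC _ ξ φ (s * ((k+1:ℕ):ℤ))} with hBk
  have hBkm : ∀ k, MeasurableSet (Bk k) := fun k =>
    (measurableSet_lt ((measurable_extC _ _ _).const_mul _) measurable_const).inter
      (measurableSet_le measurable_const ((measurable_extC _ _ _).const_mul _))
  have hstep : ∀ k ∈ Finset.range (m+1),
      (π.withDensity f) (Bk k) ≤ ENNReal.ofReal ((1/8)^(k+1)) * (π.withDensity f) Set.univ := by
    intro k hk
    have hTk1 : 1 ≤ T k := hT01.trans (hTge k).1
    have hTk0 : 0 < T k := by linarith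
    rw [withDensity_apply _ (hBkm k), withDensity_apply _ MeasurableSet.univ,
      Measure.restrict_univ, ← lintegral_indicator (hBkm k),
      ← lintegral_const_mul' _ _ ENNReal.ofReal_ne_top]
    refine key_step β X C (T k) (T (k+1)) aT (Real.exp (-(aT * (3 * T k) ^ n))) σ ξ ρ hβ hs hσ hXs
      hint (by linarith) ?_ ?_ (Real.exp_pos _).le hTk1 ?_ m k (by simpa using hk) ?_
    · have := rho_lower n aT 0 1 σ hn haT hσ le_rfl (by norm_num)
      simpa using this
    · refine le_trans (ENNReal.ofReal_le_ofReal ?_)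
        (rho_lower n aT (2 * T k) (3 * T k) σ hn haT hσ (by linarith) (by linarith))
      refine mul_le_of_le_one_left (Real.exp_pos _).le (Real.exp_le_one_iff.2 (by linarith))
    · linarith [(hTge (k+1)).1]
    · intro t ht
      have hTn : T k ≤ T k ^ n := by
        conv_lhs => rw [← Real.rpow_one (T k)]
        exact Real.rpow_le_rpow_of_exponent_le hTk1 (by linarith)
      have hTn1 : T k * T k ^ (n-1) = T k ^ n := by
        rw [mul_comm, ← Real.rpow_add_one hTk0.ne']; congr 1; ring
      have ht2 : B * T k ^ n ≤ T k * t := by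
        have : T (k+1) = B * T k ^ (n-1) := rfl
        rw [this] at ht
        calc B * T k ^ n = T k * (B * T k ^ (n-1)) := by rw [← hTn1]; ring
          _ ≤ _ := by gcongr
      have hm3 : (3 * T k) ^ n = 3 ^ n * T k ^ n := Real.mul_rpow (by norm_num) hTk0.le
      have hexp : (k+1) * E + β * (T k * t) + (k+1) * aT - (k+1) * aT ≤ 
          β * (2 * T k * t - 3 * X * T k) - aT * (3 * T k) ^ n := by
        rw [hm3]
        have h1 : β * (B * T k ^ n) ≤ β * (T k * t) := by gcongr
        have h2 : (aT * 3 ^ n + 3 * β * X + 1) * T k ^ n ≤ β * B * T k ^ n := by gcongr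
        have h3 : (3 * β * X) * T k ≤ (3 * β * X) * T k ^ n := by gcongr
        have h4 := (hTge k).2
        nlinarith
      have hEe : Real.exp ((k+1) * E) = (8 * C * Real.exp aT)^(k+1) := by
        rw [show ((k:ℝ)+1) * E = ((k+1 : ℕ) : ℝ) * E by push_cast; ring, Real.exp_nat_mul, hE,
          Real.exp_log (by linarith)]
      have hmain : (8 * C * Real.exp aT)^(k+1) * Real.exp (β * (T k * t)) ≤
          Real.exp (β * (2 * T k * t - 3 * X * T k)) * Real.exp (-(aT * (3 * T k) ^ n)) := by
        rw [← hEe, ← Real.exp_add, ← Real.exp_add, Real.exp_le_exp]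
        linarith
      have hcancel : C ^ (k+1) = (1/8)^(k+1) * (8 * C * Real.exp aT)^(k+1) * Real.exp (-aT) ^ (k+1) := by
        rw [← mul_pow, ← mul_pow]
        congr 1
        rw [Real.exp_neg]
        field_simp
      rw [hcancel]
      have := mul_le_mul_of_nonneg_left hmain
        (by positivity : 0 ≤ ((1:ℝ)/8)^(k+1) * Real.exp (-aT) ^ (k+1))
      linarith
  set Bad : Set (↥(LamS s (m+1)) → ℝ) := {φ | |φ ⟨0, h0⟩| ≤ M} with hBad
  have hcover : Bad ⊆ ⋃ k ∈ Finset.range (m+1), Bk k := by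
    intro φ hφ
    obtain ⟨k, hk, h1, h2⟩ := exists_cross (fun i => σ * extC _ ξ φ (s * (i:ℤ))) T (m+1)
      (by
        have e : extC _ ξ φ (s * ((0:ℕ):ℤ)) = φ ⟨0, h0⟩ := by
          simp [extC, h0]
        simp only [e]
        have h3 : |φ ⟨0, h0⟩| ≤ M := hφ
        have h4 : σ * φ ⟨0, h0⟩ ≤ M := by
          rcases hσ with rfl | rfl
          · linarith [(abs_le.1 h3).2]
          · linarith [(abs_le.1 h3).1]
        exact h4.trans_lt hT0M)
      (by
        have e : extC _ ξ φ (s * ((m+1:ℕ):ℤ)) = ξ z := by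
          rw [extC, dif_neg, ← hsz]
          rw [mem_LamS hs]; omega
        simp only [e, hσξ]
        exact hz2.le)
    simp only [Set.mem_iUnion]
    exact ⟨k, by simpa using hk, h1, h2⟩
  have hbadle : (π.withDensity f) Bad ≤ ENNReal.ofReal (1/7) * (π.withDensity f) Set.univ := by
    calc _ ≤ (π.withDensity f) (⋃ k ∈ Finset.range (m+1), Bk k) := measure_mono hcover
      _ ≤ ∑ k ∈ Finset.range (m+1), (π.withDensity f) (Bk k) := measure_biUnion_finset_le _ _
      _ ≤ ∑ k ∈ Finset.range (m+1), ENNReal.ofReal ((1/8)^(k+1)) * (π.withDensity f) Set.univ :=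
          Finset.sum_le_sum hstep
      _ = ENNReal.ofReal (∑ k ∈ Finset.range (m+1), (1/8)^(k+1)) * (π.withDensity f) Set.univ := by
          rw [← Finset.sum_mul, ENNReal.ofReal_sum_of_nonneg]
          intro i _; positivity
      _ ≤ _ := by
          gcongr
          exact geom_bd _
  have hmarg : marg hsub (gibbs (fun x y => if |x - y| = 1 then 1 else 0) β ρ (LamS s (m+1)) ξ) K
      ≤ ENNReal.ofReal (1/7) := by
    unfold marg gibbs
    rw [Measure.map_apply (by fun_prop) hK.measurableSet]
    refine le_trans (measure_mono (t := Bad) ?_) ?_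
    · intro φ hφ
      exact hM _ hφ ⟨0, by simp⟩
    · rw [Measure.smul_apply, smul_eq_mul]
      calc _ ≤ ((π.withDensity f) Set.univ)⁻¹ * (ENNReal.ofReal (1/7) * (π.withDensity f) Set.univ) := by
            gcongr
        _ = ENNReal.ofReal (1/7) * (((π.withDensity f) Set.univ)⁻¹ * (π.withDensity f) Set.univ) := by
            ring
        _ ≤ ENNReal.ofReal (1/7) * 1 := by
            gcongr
            exact ENNReal.inv_mul_le_one _
        _ = _ := mul_one _
  have := hfin.trans hmarg
  rw [ENNReal.ofReal_le_ofReal_iff (by norm_num)] at this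
  norm_num at this
end
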